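/- Let p ≥ 5 be a prime, and for a positive integer n let V_p(n) denote the set of positive integers not exceeding n whose least prime divisor is p. Then there exists n_p such that for all integers n ≥ n_p, ∑_{j ∈ V_p(n)} (−1)^{s(j)} < 0. -/

import Mathlib

open Finset Filter Topology

noncomputable section

/-- `s n` is the number of 1's in the binary expansion of `n`. -/
def s (n : ℕ) : ℕ := (Nat.digits 2 n).count 1

/-- `S m x = ∑_{0 ≤ n < x, m ∣ n} (-1)^(s n)`. -/
def S (m x : ℕ) : ℝ := ∑ n ∈ Finset.range x, if m ∣ n then (-1 : ℝ) ^ (s n) else 0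

/-- `F α N = ∑_{n=0}^{N-1} e^{2πi(αn + s(n)/2)}`. -/
def F (α : ℝ) (N : ℕ) : ℂ :=
  ∑ n ∈ Finset.range N, Complex.exp (2 * Real.pi * Complex.I * ((α : ℂ) * n + (s n : ℂ) / 2))

/-- `bsq m = b_m ^ 2`, defined by cases on `m mod 3`. -/
def bsq (m : ℕ) : ℝ :=
  if m % 3 = 0 then
    Real.sin (Real.pi / 3 * (1 + 3 / m)) * (Real.sqrt 3 - Real.sin (Real.pi / 3 * (1 + 3 / m)))
  else if m % 3 = 1 then
    Real.sin (Real.pi / 3 * (1 - 1 / m)) * (Real.sqrt 3 - Real.sin (Real.pi / 3 * (1 - 1 / m)))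
  else
    Real.sin (Real.pi / 3 * (1 + 1 / m)) * (Real.sqrt 3 - Real.sin (Real.pi / 3 * (1 + 1 / m)))

/-- `b m` is the positive real number with `(b m)^2 = bsq m`. -/
def b (m : ℕ) : ℝ := Real.sqrt (bsq m)

/-- `lam m = λ_m = 1 + log₂ b_m`. -/
def lam (m : ℕ) : ℝ := 1 + Real.logb 2 (b m)

/-- `mu m = μ_m = (2 b_m + 1)/(2 b_m - 1)`. -/
def mu (m : ℕ) : ℝ := (2 * b m + 1) / (2 * b m - 1)

/-- `U m x`: positive integers `≤ x` divisible by `m` and not by 3. -/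
def U (m x : ℕ) : Finset ℕ := (Finset.Icc 1 x).filter (fun n => m ∣ n ∧ ¬ (3 ∣ n))

/-- `V p n`: positive integers `≤ n` whose least prime divisor is `p`. -/
def V (p n : ℕ) : Finset ℕ := (Finset.Icc 1 n).filter (fun j => Nat.minFac j = p)

/-!
By Fourier inversion modulo `p!`, the indicator of `{j | j.minFac = p}` is a positive multiple of
the indicator of the integers coprime to `6`, plus a combination of functions `j ↦ z ^ j` where `z`
is a root of unity whose order is divisible by a prime larger than `3`.

For such `z` the sums `∑ j < n, (-1) ^ s j * z ^ j` are `o(n ^ log₄ 3)`. They reduce to the products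
`∏ i < k, (1 - z ^ 2 ^ i)`. Put `x i = ‖1 - z ^ 2 ^ i‖ ^ 2`, so that `x (i + 1) = x i * (4 - x i)`;
then `x i ^ 2 * x (i + 1) = x i ^ 3 * (4 - x i)` is at most `27`, with equality only for `x i = 3`,
that is, when `z ^ 2 ^ i` is a primitive cube root of unity. As this never happens and the orbit is
finite, the products are `o(√3 ^ k)`.

The sum of the signs over the `j < n` coprime to `6` is at most `-c * n ^ log₄ 3`. Removing the even
`j` reduces it to the class `1` modulo `3`, whose sum is multiplied by `3`, up to a bounded error,
when `n` is multiplied by `4`; a finite check at `16 ≤ n < 64` starts the induction.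
-/

/-- The Thue–Morse sign `(-1) ^ s n`; it is `ℤ`-valued so that inequalities between its sums can be
checked by integer arithmetic. -/
def thueMorse (n : ℕ) : ℤ := (-1) ^ s n

lemma s_two_mul (n : ℕ) : s (2 * n) = s n := by
  rcases n.eq_zero_or_pos with rfl | hn
  · rfl
  · simp [s, Nat.digits_def' one_lt_two (show 0 < 2 * n by omega)]

lemma s_two_mul_add_one (n : ℕ) : s (2 * n + 1) = s n + 1 := by
  simp [s, show (2 * n + 1) % 2 = 1 by omega, show (2 * n + 1) / 2 = n by omega]

lemma thueMorse_zero : thueMorse 0 = 1 := rfl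

lemma thueMorse_two_mul (n : ℕ) : thueMorse (2 * n) = thueMorse n := by
  rw [thueMorse, s_two_mul, thueMorse]

lemma thueMorse_two_mul_add_one (n : ℕ) : thueMorse (2 * n + 1) = -thueMorse n := by
  rw [thueMorse, s_two_mul_add_one, pow_succ, mul_neg_one, thueMorse]

lemma thueMorse_eq_one_or_neg_one (n : ℕ) : thueMorse n = 1 ∨ thueMorse n = -1 :=
  neg_one_pow_eq_or ℤ (s n)

lemma thueMorse_two_pow_add {k j : ℕ} (hj : j < 2 ^ k) : thueMorse (2 ^ k + j) = -thueMorse j := by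
  induction k generalizing j with
  | zero =>
    obtain rfl : j = 0 := by simpa using hj
    exact thueMorse_two_mul_add_one 0
  | succ k ih =>
    rw [pow_succ] at hj
    obtain ⟨i, rfl | rfl⟩ := j.even_or_odd'
    · rw [pow_succ', ← mul_add, thueMorse_two_mul, thueMorse_two_mul, ih (by omega)]
    · rw [pow_succ', ← add_assoc, ← mul_add, thueMorse_two_mul_add_one,
        thueMorse_two_mul_add_one, ih (by omega)]

lemma sum_thueMorse_two_mul (n : ℕ) : ∑ j ∈ range (2 * n), thueMorse j = 0 := by
  induction n with
  | zero => rfl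
  | succ n ih =>
    rw [mul_add_one, sum_range_succ, sum_range_succ, ih, thueMorse_two_mul,
      thueMorse_two_mul_add_one, zero_add, add_neg_cancel]

lemma neg_one_le_sum_thueMorse (n : ℕ) : -1 ≤ ∑ j ∈ range n, thueMorse j := by
  obtain ⟨m, rfl | rfl⟩ := n.even_or_odd'
  · simp [sum_thueMorse_two_mul]
  · rw [sum_range_succ, sum_thueMorse_two_mul]
    rcases thueMorse_eq_one_or_neg_one (2 * m) with h | h <;> simp [h]

/-- The sum of the Thue–Morse signs over the `j < n` with `j ≡ 1 (mod 3)`. It carries the main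
term: each quadrupling of `n` multiplies it by `3` up to a bounded error. -/
def thueMorseSumOneModThree (n : ℕ) : ℤ := ∑ j ∈ range n with j % 3 = 1, thueMorse j

lemma thueMorseSumOneModThree_succ (n : ℕ) : thueMorseSumOneModThree (n + 1) =
    thueMorseSumOneModThree n + if n % 3 = 1 then thueMorse n else 0 := by
  simp only [thueMorseSumOneModThree, sum_filter, sum_range_succ]

lemma thueMorse_four_mul (n : ℕ) : thueMorse (4 * n) = thueMorse n ∧
    thueMorse (4 * n + 1) = -thueMorse n ∧ thueMorse (4 * n + 2) = -thueMorse n ∧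
    thueMorse (4 * n + 3) = thueMorse n := by
  have h0 := thueMorse_two_mul n
  have h1 := thueMorse_two_mul_add_one n
  refine ⟨?_, ?_, ?_, ?_⟩
  · rw [show 4 * n = 2 * (2 * n) by ring, thueMorse_two_mul, h0]
  · rw [show 4 * n + 1 = 2 * (2 * n) + 1 by ring, thueMorse_two_mul_add_one, h0]
  · rw [show 4 * n + 2 = 2 * (2 * n + 1) by ring, thueMorse_two_mul, h1]
  · rw [show 4 * n + 3 = 2 * (2 * n + 1) + 1 by ring, thueMorse_two_mul_add_one, h1, neg_neg]

-- The residues of `4 * n + i` for `i = 0, 1, 2, 3` are those of `n, n + 1, n + 2, n`, with signs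
-- `+, -, -, +` relative to that of `n`: class `1` receives `2` if `n` lies in it and `-1` if not.
lemma thueMorseSumOneModThree_four_mul (n : ℕ) : thueMorseSumOneModThree (4 * n) =
    3 * thueMorseSumOneModThree n - ∑ j ∈ range n, thueMorse j := by
  induction n with
  | zero => rfl
  | succ n ih =>
    obtain ⟨h0, h1, h2, h3⟩ := thueMorse_four_mul n
    simp only [mul_add_one, thueMorseSumOneModThree_succ, sum_range_succ, ih, h0, h1, h2, h3]
    split_ifs <;> omega

lemma thueMorseSumOneModThree_le_three_mul (n : ℕ) :
    thueMorseSumOneModThree n ≤ 3 * thueMorseSumOneModThree (n / 4) + 2 := by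
  obtain ⟨m, i, hi, rfl⟩ : ∃ m i, i < 4 ∧ n = 4 * m + i := ⟨n / 4, n % 4, by omega, by omega⟩
  rw [show (4 * m + i) / 4 = m by omega]
  obtain ⟨h0, h1, h2, -⟩ := thueMorse_four_mul m
  have hmul := thueMorseSumOneModThree_four_mul m
  have htotal := neg_one_le_sum_thueMorse m
  have hsign := thueMorse_eq_one_or_neg_one m
  interval_cases i <;> simp only [add_zero, thueMorseSumOneModThree_succ, h0, h1, h2]
  · omega
  all_goals split_ifs <;> omega

-- The summand `1` absorbs the error in the recursion: `3 * x + 2 + 1 = 3 * (x + 1)`.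
lemma thueMorseSumOneModThree_add_one_le {k n : ℕ} (hn : 16 * 4 ^ k ≤ n) (hn' : n < 64 * 4 ^ k) :
    thueMorseSumOneModThree n + 1 ≤ -2 * 3 ^ k := by
  induction k generalizing n with
  | zero =>
    have base : ∀ m < 64, 16 ≤ m → thueMorseSumOneModThree m + 1 ≤ -2 := by
      unfold thueMorseSumOneModThree thueMorse s
      decide +kernel
    simpa using base n (by simpa using hn') (by simpa using hn)
  | succ k ih =>
    rw [pow_succ] at hn hn' ⊢
    have hquarter := ih (n := n / 4) (by omega) (by omega)
    have hrec := thueMorseSumOneModThree_le_three_mul n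
    linarith

lemma coprime_six_iff (j : ℕ) : Nat.Coprime 6 j ↔ j % 2 = 1 ∧ j % 3 ≠ 0 := by
  rw [show 6 = 2 * 3 from rfl, Nat.coprime_mul_iff_left, Nat.prime_two.coprime_iff_not_dvd,
    Nat.prime_three.coprime_iff_not_dvd]
  omega

lemma sum_thueMorse_coprime_six (n : ℕ) :
    ∑ j ∈ range n with Nat.Coprime 6 j, thueMorse j =
      thueMorseSumOneModThree (n / 2) - ∑ j ∈ range (n / 2), thueMorse j := by
  have even_case (m : ℕ) : ∑ j ∈ range (2 * m) with Nat.Coprime 6 j, thueMorse j =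
      thueMorseSumOneModThree m - ∑ j ∈ range m, thueMorse j := by
    induction m with
    | zero => rfl
    | succ m ih =>
      simp only [coprime_six_iff, sum_filter] at ih ⊢
      simp only [mul_add_one, sum_range_succ, thueMorseSumOneModThree_succ, ih,
        thueMorse_two_mul, thueMorse_two_mul_add_one]
      split_ifs <;> omega
  obtain ⟨m, rfl | rfl⟩ := n.even_or_odd'
  · rw [even_case, Nat.mul_div_cancel_left m two_pos]
  · have hm : ¬ Nat.Coprime 6 (2 * m) := by rw [coprime_six_iff]; omega
    rw [range_add_one, filter_insert, if_neg hm, even_case, show (2 * m + 1) / 2 = m by omega]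

lemma sum_thueMorse_coprime_six_le {k n : ℕ} (hn : 32 * 4 ^ k ≤ n) (hn' : n < 128 * 4 ^ k) :
    ∑ j ∈ range n with Nat.Coprime 6 j, thueMorse j ≤ -2 * 3 ^ k := by
  have hmain := thueMorseSumOneModThree_add_one_le (k := k) (n := n / 2) (by omega) (by omega)
  have htotal := neg_one_le_sum_thueMorse (n / 2)
  rw [sum_thueMorse_coprime_six]
  linarith

lemma four_pow_rpow_logb (k : ℕ) : ((4 : ℝ) ^ k) ^ Real.logb 4 3 = 3 ^ k := by
  rw [← Real.rpow_pow_comm (by norm_num), Real.rpow_logb (by norm_num) (by norm_num) (by norm_num)]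

lemma sum_thueMorse_coprime_six_le_rpow {n : ℕ} (hn : 32 ≤ n) :
    ((∑ j ∈ range n with Nat.Coprime 6 j, thueMorse j : ℤ) : ℝ) ≤
      -2 * (n / 128 : ℝ) ^ Real.logb 4 3 := by
  obtain ⟨k, hk, hk'⟩ : ∃ k, 32 * 4 ^ k ≤ n ∧ n < 128 * 4 ^ k := by
    have hlog := Nat.pow_log_le_self 4 (show n / 32 ≠ 0 by omega)
    have hlog' := Nat.lt_pow_succ_log_self (b := 4) (by norm_num) (n / 32)
    exact ⟨Nat.log 4 (n / 32), by omega, by omega⟩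
  have hθ : 0 ≤ Real.logb 4 3 := Real.logb_nonneg (by norm_num) (by norm_num)
  have hpow : (n / 128 : ℝ) ^ Real.logb 4 3 ≤ 3 ^ k := by
    rw [← four_pow_rpow_logb]
    gcongr
    rw [div_le_iff₀' (by norm_num)]
    exact_mod_cast hk'.le
  have hsum : ((∑ j ∈ range n with Nat.Coprime 6 j, thueMorse j : ℤ) : ℝ) ≤ -2 * 3 ^ k := by
    exact_mod_cast sum_thueMorse_coprime_six_le hk hk'
  linarith

lemma sum_range_two_pow_add_thueMorse_mul_pow (z : ℂ) {k m : ℕ} (hm : m ≤ 2 ^ k) :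
    ∑ j ∈ range (2 ^ k + m), (thueMorse j : ℂ) * z ^ j =
      ∑ j ∈ range (2 ^ k), (thueMorse j : ℂ) * z ^ j -
        z ^ 2 ^ k * ∑ j ∈ range m, (thueMorse j : ℂ) * z ^ j := by
  rw [sum_range_add, sub_eq_add_neg, mul_sum, ← sum_neg_distrib]
  congr 1
  refine sum_congr rfl fun j hj => ?_
  rw [thueMorse_two_pow_add ((mem_range.mp hj).trans_le hm), pow_add]
  push_cast
  ring

lemma sum_range_two_pow_thueMorse_mul_pow (z : ℂ) (k : ℕ) :
    ∑ j ∈ range (2 ^ k), (thueMorse j : ℂ) * z ^ j = ∏ i ∈ range k, (1 - z ^ 2 ^ i) := by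
  induction k with
  | zero => simp [thueMorse_zero]
  | succ k ih =>
    rw [pow_succ, mul_two, sum_range_two_pow_add_thueMorse_mul_pow z le_rfl, prod_range_succ, ← ih]
    ring

lemma norm_sum_thueMorse_mul_pow_le {z : ℂ} (hz : ‖z‖ ≤ 1) {k n : ℕ} (hn : n < 2 ^ k) :
    ‖∑ j ∈ range n, (thueMorse j : ℂ) * z ^ j‖ ≤
      ∑ i ∈ range k, ‖∏ l ∈ range i, (1 - z ^ 2 ^ l)‖ := by
  induction k generalizing n with
  | zero =>
    obtain rfl : n = 0 := by simpa using hn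
    simp
  | succ k ih =>
    rw [sum_range_succ]
    rcases lt_or_ge n (2 ^ k) with hlt | hge
    · exact (ih hlt).trans (le_add_of_nonneg_right (norm_nonneg _))
    · obtain ⟨m, rfl⟩ := Nat.exists_eq_add_of_le hge
      have hm : m < 2 ^ k := by rw [pow_succ] at hn; omega
      rw [sum_range_two_pow_add_thueMorse_mul_pow z hm.le, sum_range_two_pow_thueMorse_mul_pow,
        add_comm (∑ i ∈ range k, _)]
      refine (norm_sub_le _ _).trans (add_le_add_right ?_ _)
      rw [norm_mul, norm_pow]
      exact (mul_le_of_le_one_left (norm_nonneg _) (pow_le_one₀ (norm_nonneg z) hz)).trans (ih hm)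

lemma norm_one_sub_sq_sq {w : ℂ} (hw : ‖w‖ = 1) :
    ‖1 - w ^ 2‖ ^ 2 = ‖1 - w‖ ^ 2 * (4 - ‖1 - w‖ ^ 2) := by
  have h := parallelogram_law_with_norm ℂ 1 w
  rw [hw, norm_one] at h
  rw [show 1 - w ^ 2 = (1 - w) * (1 + w) by ring, norm_mul, mul_pow,
    show ‖1 + w‖ ^ 2 = 4 - ‖1 - w‖ ^ 2 by linarith]

lemma cube_eq_one_of_norm_one_sub_sq {w : ℂ} (hw : ‖w‖ = 1) (h : ‖1 - w‖ ^ 2 = 3) : w ^ 3 = 1 := by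
  have hw' : w * starRingEnd ℂ w = 1 := by rw [Complex.mul_conj', hw]; norm_num
  have h' : (1 - w) * (1 - starRingEnd ℂ w) = 3 := by
    rw [← map_one (starRingEnd ℂ), ← map_sub, map_one, Complex.mul_conj']
    exact_mod_cast h
  linear_combination (w - 1) * (w * (hw' - h') - hw')

lemma cube_mul_four_sub_lt {x : ℝ} (hx : x ≠ 3) : x ^ 3 * (4 - x) < 27 := by
  have hpos : 0 < (x - 3) ^ 2 * ((x + 1) ^ 2 + 2) := by
    have := sub_ne_zero.mpr hx
    positivity
  linarith [show 27 - x ^ 3 * (4 - x) = (x - 3) ^ 2 * ((x + 1) ^ 2 + 2) by ring]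

lemma norm_one_sub_pow_four_mul_lt {w : ℂ} (hw : ‖w‖ = 1) (hw3 : w ^ 3 ≠ 1) :
    (‖1 - w‖ ^ 2) ^ 2 * ‖1 - w ^ 2‖ ^ 2 < 27 := by
  rw [norm_one_sub_sq_sq hw, ← mul_assoc, ← pow_succ]
  exact cube_mul_four_sub_lt (mt (cube_eq_one_of_norm_one_sub_sq hw) hw3)

lemma exists_norm_one_sub_pow_four_mul_le {N : ℕ} (hN : N ≠ 0) : ∃ M ∈ Set.Ioo (1 : ℝ) 27,
    ∀ w : ℂ, w ^ N = 1 → w ^ 3 ≠ 1 → (‖1 - w‖ ^ 2) ^ 2 * ‖1 - w ^ 2‖ ^ 2 ≤ M := by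
  have hfin : {w : ℂ | w ^ N = 1 ∧ w ^ 3 ≠ 1}.Finite :=
    (Polynomial.nthRootsFinset N (1 : ℂ)).finite_toSet.subset fun w hw =>
      (Polynomial.mem_nthRootsFinset hN.bot_lt 1).mpr hw.1
  have hle : ∀ᶠ M in 𝓝[<] (27 : ℝ), ∀ w ∈ {w : ℂ | w ^ N = 1 ∧ w ^ 3 ≠ 1},
      (‖1 - w‖ ^ 2) ^ 2 * ‖1 - w ^ 2‖ ^ 2 ≤ M := by
    refine hfin.eventually_all.mpr fun w hw => nhdsWithin_le_nhds (eventually_ge_nhds ?_)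
    exact norm_one_sub_pow_four_mul_lt (Complex.norm_eq_one_of_pow_eq_one hw.1 hN) hw.2
  obtain ⟨M, hM, hle⟩ := (hle.and (Ioo_mem_nhdsLT (by norm_num : (1 : ℝ) < 27))).exists
  exact ⟨M, hle, fun w hw hw3 => hM w ⟨hw, hw3⟩⟩

lemma prod_range_pow_three_le {x : ℕ → ℝ} {B M : ℝ} (hB : 1 ≤ B) (hM : 1 ≤ M)
    (hx : ∀ i, 0 ≤ x i) (hxB : ∀ i, x i ≤ B) (hxM : ∀ i, x i ^ 2 * x (i + 1) ≤ M) (k : ℕ) :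
    (∏ i ∈ range k, x i) ^ 3 ≤ B ^ 3 * M ^ k := by
  cases k with
  | zero => simpa using one_le_pow₀ hB
  | succ k =>
    calc (∏ i ∈ range (k + 1), x i) ^ 3
        = (∏ i ∈ range (k + 1), x i) ^ 2 * ∏ i ∈ range (k + 1), x i := pow_succ _ _
      _ = x 0 * (∏ i ∈ range k, x i ^ 2 * x (i + 1)) * x k ^ 2 := by
          nth_rw 2 [prod_range_succ']
          rw [prod_range_succ, prod_mul_distrib, prod_pow]
          ring
      _ ≤ B * (∏ _i ∈ range k, M) * B ^ 2 := by
          have hnonneg (i : ℕ) : 0 ≤ x i ^ 2 * x (i + 1) := mul_nonneg (sq_nonneg _) (hx _)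
          have := prod_nonneg fun i (_ : i ∈ range k) => hnonneg i
          gcongr with i
          exacts [hxB 0, fun i _ => hnonneg i, hxM i, hx k, hxB k]
      _ = B ^ 3 * M ^ k := by
          rw [prod_const, card_range]
          ring
      _ ≤ B ^ 3 * M ^ (k + 1) := by
          gcongr
          exact k.le_succ

lemma prod_one_sub_pow_two_pow_isLittleO {z : ℂ} {N : ℕ} (hN : N ≠ 0) (hz : z ^ N = 1)
    (hz3 : ∀ i, z ^ (3 * 2 ^ i) ≠ 1) :
    (fun k => ∏ i ∈ range k, (1 - z ^ 2 ^ i)) =o[atTop] fun k => √3 ^ k := by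
  obtain ⟨M, ⟨hM1, hM27⟩, hM⟩ := exists_norm_one_sub_pow_four_mul_le hN
  have hroot (i : ℕ) : (z ^ 2 ^ i) ^ N = 1 := by rw [pow_right_comm, hz, one_pow]
  have hle_four (i : ℕ) : ‖1 - z ^ 2 ^ i‖ ^ 2 ≤ 4 := by
    have h := norm_sub_le 1 (z ^ 2 ^ i)
    rw [norm_one, Complex.norm_eq_one_of_pow_eq_one (hroot i) hN] at h
    nlinarith [norm_nonneg (1 - z ^ 2 ^ i)]
  have hle_M (i : ℕ) : (‖1 - z ^ 2 ^ i‖ ^ 2) ^ 2 * ‖1 - z ^ 2 ^ (i + 1)‖ ^ 2 ≤ M := by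
    have h := hM (z ^ 2 ^ i) (hroot i) (by rw [← pow_mul, mul_comm]; exact hz3 i)
    rwa [← pow_mul z, ← pow_succ] at h
  have hbound (k : ℕ) : ‖(∏ i ∈ range k, (1 - z ^ 2 ^ i)) ^ 6‖ ≤ 4 ^ 3 * ‖M ^ k‖ := by
    rw [norm_pow, norm_prod, Real.norm_of_nonneg (by positivity), pow_mul _ 2 3, ← prod_pow]
    exact prod_range_pow_three_le (by norm_num) hM1.le (fun i => sq_nonneg _) hle_four hle_M k
  refine Asymptotics.IsLittleO.of_pow (n := 6) ?_ (by norm_num)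
  refine (Asymptotics.IsBigO.of_bound (4 ^ 3) (.of_forall hbound)).trans_isLittleO ?_
  have hsqrt : (fun k => √3 ^ k) ^ 6 = fun k => (27 : ℝ) ^ k := by
    funext k
    rw [Pi.pow_apply, pow_right_comm, pow_mul √3 2 3, Real.sq_sqrt (by norm_num)]
    norm_num
  rw [hsqrt]
  exact isLittleO_pow_pow_of_lt_left (by linarith) hM27

/-- The functions whose correlation with the Thue–Morse signs below `n` is `o(n ^ log₄ 3)`, hence
of smaller order than that of the indicator of the integers coprime to `6`. -/
def negligible : Submodule ℂ (ℕ → ℂ) where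
  carrier := {f | (fun n : ℕ => ∑ j ∈ range n, (thueMorse j : ℂ) * f j) =o[atTop]
    fun n : ℕ => (n : ℝ) ^ Real.logb 4 3}
  zero_mem' := by simp
  add_mem' hf hg := by simpa [mul_add, sum_add_distrib] using hf.add hg
  smul_mem' c f hf := by
    simpa [mul_left_comm, ← mul_sum] using hf.const_mul_left c

lemma mem_negligible {f : ℕ → ℂ} : f ∈ negligible ↔
    (fun n : ℕ => ∑ j ∈ range n, (thueMorse j : ℂ) * f j) =o[atTop]
      fun n : ℕ => (n : ℝ) ^ Real.logb 4 3 := Iff.rfl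

lemma two_pow_rpow_logb (k : ℕ) : ((2 : ℝ) ^ k) ^ Real.logb 4 3 = √3 ^ k := by
  have htwo : (2 : ℝ) ^ Real.logb 4 3 = √3 := by
    rw [eq_comm, Real.sqrt_eq_iff_eq_sq (by norm_num) (by positivity),
      Real.rpow_pow_comm (by norm_num)]
    norm_num
  rw [← Real.rpow_pow_comm (by norm_num), htwo]

lemma one_lt_sqrt_three : 1 < √3 := Real.lt_sqrt_of_sq_lt (by norm_num)

lemma sum_sqrt_three_pow_log_isBigO :
    (fun n => ∑ i ∈ range (Nat.log 2 n + 1), √3 ^ i) =O[atTop]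
      fun n : ℕ => (n : ℝ) ^ Real.logb 4 3 := by
  have hsqrt := one_lt_sqrt_three
  refine .of_bound (√3 / (√3 - 1)) ((eventually_ne_atTop 0).mono fun n hn => ?_)
  rw [Real.norm_of_nonneg (by positivity), Real.norm_of_nonneg (by positivity)]
  have hθ : 0 ≤ Real.logb 4 3 := Real.logb_nonneg (by norm_num) (by norm_num)
  have hlog : √3 ^ Nat.log 2 n ≤ (n : ℝ) ^ Real.logb 4 3 := by
    rw [← two_pow_rpow_logb]
    gcongr
    exact_mod_cast Nat.pow_log_le_self 2 hn
  calc ∑ i ∈ range (Nat.log 2 n + 1), √3 ^ i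
      = (√3 ^ (Nat.log 2 n + 1) - 1) / (√3 - 1) := geom_sum_eq hsqrt.ne' _
    _ ≤ √3 ^ (Nat.log 2 n + 1) / (√3 - 1) := by
        gcongr
        linarith
    _ = √3 / (√3 - 1) * √3 ^ Nat.log 2 n := by ring
    _ ≤ √3 / (√3 - 1) * (n : ℝ) ^ Real.logb 4 3 := by
        have := sub_pos.mpr hsqrt
        gcongr

lemma pow_mem_negligible {z : ℂ} {N : ℕ} (hN : N ≠ 0) (hz : z ^ N = 1)
    (hz3 : ∀ i, z ^ (3 * 2 ^ i) ≠ 1) : (fun j : ℕ => z ^ j) ∈ negligible := by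
  have hgeom : Tendsto (fun k => ∑ i ∈ range k, √3 ^ i) atTop atTop :=
    tendsto_atTop_mono (fun k => by
      simpa using sum_le_sum fun i (_ : i ∈ range k) => one_le_pow₀ (n := i) one_lt_sqrt_three.le)
      tendsto_natCast_atTop_atTop
  have hlog : Tendsto (fun n => Nat.log 2 n + 1) atTop atTop :=
    tendsto_atTop_mono (fun n => Nat.le_succ _) (tendsto_atTop_atTop.mpr fun k =>
      ⟨2 ^ k, fun n hn => Nat.le_log_of_pow_le one_lt_two hn⟩)
  calc (fun n : ℕ => ∑ j ∈ range n, (thueMorse j : ℂ) * z ^ j)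
      =O[atTop] fun n => ∑ i ∈ range (Nat.log 2 n + 1), ‖∏ l ∈ range i, (1 - z ^ 2 ^ l)‖ :=
        .of_norm_le fun n => norm_sum_thueMorse_mul_pow_le
          (Complex.norm_eq_one_of_pow_eq_one hz hN).le (Nat.lt_pow_succ_log_self one_lt_two n)
    _ =o[atTop] fun n => ∑ i ∈ range (Nat.log 2 n + 1), √3 ^ i :=
        ((prod_one_sub_pow_two_pow_isLittleO hN hz hz3).norm_left.sum_range
          (fun i => by positivity) hgeom).comp_tendsto hlog
    _ =O[atTop] fun n => (n : ℝ) ^ Real.logb 4 3 := sum_sqrt_three_pow_log_isBigO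

lemma stdAddChar_mul_natCast {N : ℕ} [NeZero N] (a : ZMod N) (j : ℕ) :
    ZMod.stdAddChar (a * (j : ZMod N)) = ZMod.stdAddChar a ^ j := by
  rw [mul_comm, ← nsmul_eq_mul, AddChar.map_nsmul_eq_pow]

lemma stdAddChar_pow_self {N : ℕ} [NeZero N] (a : ZMod N) : ZMod.stdAddChar a ^ N = 1 := by
  rw [← stdAddChar_mul_natCast, ZMod.natCast_self, mul_zero, AddChar.map_zero_eq_one]

lemma mem_span_pow_of_periodic {N : ℕ} (hN : N ≠ 0) {f : ℕ → ℂ} (hf : Function.Periodic f N) :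
    f ∈ Submodule.span ℂ {g | ∃ z : ℂ, z ^ N = 1 ∧ g = fun j => z ^ j} := by
  have : NeZero N := ⟨hN⟩
  let Φ : ZMod N → ℂ := fun a => f a.val
  have hinv : f = ∑ a, ((N : ℂ)⁻¹ * ZMod.dft Φ a) • fun j => ZMod.stdAddChar a ^ j := by
    funext j
    have h := congr_fun (ZMod.dft.symm_apply_apply Φ) j
    simp only [ZMod.invDFT_apply, Φ, ZMod.val_natCast, hf.map_mod_nat] at h
    rw [← h, smul_sum, Finset.sum_apply]
    refine sum_congr rfl fun a _ => ?_
    simp only [stdAddChar_mul_natCast, Pi.smul_apply, smul_eq_mul]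
    ring
  rw [hinv]
  exact sum_mem fun a _ => Submodule.smul_mem _ _
    (Submodule.subset_span ⟨_, stdAddChar_pow_self a, rfl⟩)

lemma indicator_dvd_sub_inv (q : ℕ) [NeZero q] :
    {j | q ∣ j}.indicator (1 : ℕ → ℂ) - (q : ℂ)⁻¹ • 1 =
      (q : ℂ)⁻¹ • ∑ a ∈ univ.erase (0 : ZMod q), fun j : ℕ => ZMod.stdAddChar a ^ j := by
  funext j
  have h := AddChar.sum_mulShift (j : ZMod q) (ZMod.isPrimitive_stdAddChar q)
  simp only [stdAddChar_mul_natCast, ZMod.natCast_eq_zero_iff, ZMod.card] at h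
  rw [← add_sum_erase _ _ (mem_univ 0), AddChar.map_zero_eq_one, one_pow] at h
  have hq : (q : ℂ) ≠ 0 := NeZero.ne _
  simp only [Pi.sub_apply, Pi.smul_apply, Finset.sum_apply, Pi.one_apply, Set.indicator_apply,
    Set.mem_ofPred_eq, smul_eq_mul, eq_sub_of_add_eq' h]
  split_ifs <;> simp [mul_sub, hq]

lemma mul_pow_mem_negligible {N q : ℕ} (hN : N ≠ 0) (hq : q.Prime) (hq3 : 3 < q) (hqN : ¬ q ∣ N)
    {z w : ℂ} (hz : z ^ N = 1) (hw : w ^ q = 1) (hw1 : w ≠ 1) :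
    (fun j : ℕ => (z * w) ^ j) ∈ negligible := by
  refine pow_mem_negligible (mul_ne_zero hN hq.ne_zero) ?_ fun i h => ?_
  · rw [mul_pow, pow_mul, hz, one_pow, one_mul, pow_mul', hw, one_pow]
  · have hwN : w ^ (3 * 2 ^ i * N) = 1 := by
      have h' : ((z * w) ^ N) ^ (3 * 2 ^ i) = 1 := by rw [pow_right_comm, h, one_pow]
      rwa [mul_pow, hz, one_mul, ← pow_mul'] at h'
    have : Fact q.Prime := ⟨hq⟩
    rw [← orderOf_dvd_iff_pow_eq_one, orderOf_eq_prime hw hw1, hq.dvd_mul, hq.dvd_mul] at hwN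
    rcases hwN with (h3 | h2) | hN'
    · exact absurd (Nat.le_of_dvd three_pos h3) (by omega)
    · exact absurd (Nat.le_of_dvd two_pos (hq.dvd_of_dvd_pow h2)) (by omega)
    · exact hqN hN'

lemma mul_indicator_dvd_sub_mem_negligible {N q : ℕ} (hN : N ≠ 0) (hq : q.Prime) (hq3 : 3 < q)
    (hqN : ¬ q ∣ N) {f : ℕ → ℂ} (hf : Function.Periodic f N) :
    f * {j | q ∣ j}.indicator 1 - (q : ℂ)⁻¹ • f ∈ negligible := by
  have : NeZero q := ⟨hq.ne_zero⟩
  have hspan : Submodule.span ℂ {g | ∃ z : ℂ, z ^ N = 1 ∧ g = fun j => z ^ j} ≤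
      negligible.comap
        (LinearMap.mulRight ℂ ({j | q ∣ j}.indicator 1 - (q : ℂ)⁻¹ • 1)) := by
    refine Submodule.span_le.mpr ?_
    rintro _ ⟨z, hz, rfl⟩
    rw [SetLike.mem_coe, Submodule.mem_comap, LinearMap.mulRight_apply, indicator_dvd_sub_inv,
      mul_smul_comm, mul_sum]
    refine Submodule.smul_mem _ _ (sum_mem fun a ha => ?_)
    have ha1 : ZMod.stdAddChar (N := q) a ≠ 1 := by
      rw [← AddChar.map_zero_eq_one (ZMod.stdAddChar (N := q))]
      exact ZMod.injective_stdAddChar.ne (ne_of_mem_erase ha)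
    convert mul_pow_mem_negligible hN hq hq3 hqN hz (stdAddChar_pow_self a) ha1 using 1
    funext j
    exact (mul_pow _ _ _).symm
  have h := hspan (mem_span_pow_of_periodic hN hf)
  rwa [Submodule.mem_comap, LinearMap.mulRight_apply, mul_sub, mul_smul_comm, mul_one] at h

lemma periodic_indicator_coprime (m : ℕ) :
    Function.Periodic ({j | m.Coprime j}.indicator (1 : ℕ → ℂ)) m := fun j => by
  simp [Set.indicator_apply]

lemma indicator_coprime_mul {q m : ℕ} (hq : q.Prime) :
    {j | (q * m).Coprime j}.indicator (1 : ℕ → ℂ) = {j | m.Coprime j}.indicator 1 -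
      {j | m.Coprime j}.indicator 1 * {j | q ∣ j}.indicator 1 := by
  funext j
  by_cases hm : m.Coprime j <;> by_cases hqj : q ∣ j <;>
    simp [Set.indicator_apply, hm, hqj, Nat.coprime_mul_iff_left, hq.coprime_iff_not_dvd]

lemma exists_indicator_coprime_sub_mem_negligible {m : ℕ} (hm : m ≠ 0) (h6 : 6 ∣ m) :
    ∃ c : ℝ, 0 < c ∧ {j | m.Coprime j}.indicator 1 -
      (c : ℂ) • {j | Nat.Coprime 6 j}.indicator 1 ∈ negligible := by
  obtain ⟨m, rfl⟩ := h6
  induction m using induction_on_primes with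
  | zero => exact absurd rfl hm
  | one => exact ⟨1, one_pos, by simp⟩
  | prime_mul q m hq ih =>
    rw [mul_left_comm] at hm ⊢
    have hm0 := right_ne_zero_of_mul hm
    obtain ⟨c, hc, hneg⟩ := ih hm0
    by_cases hqm : q ∣ 6 * m
    · refine ⟨c, hc, ?_⟩
      have hcop (j : ℕ) : (q * (6 * m)).Coprime j ↔ (6 * m).Coprime j :=
        Nat.coprime_mul_iff_left.trans (and_iff_right_of_imp fun h => h.coprime_dvd_left hqm)
      simpa only [hcop] using hneg
    · have hq3 : 3 < q := by
        by_contra! hle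
        have := hq.two_le
        interval_cases q <;> omega
      have hq1 : (1 : ℝ) < q := by exact_mod_cast hq.one_lt
      refine ⟨(1 - (q : ℝ)⁻¹) * c, mul_pos (sub_pos.mpr (inv_lt_one_of_one_lt₀ hq1)) hc, ?_⟩
      have hsieve := mul_indicator_dvd_sub_mem_negligible hm0 hq hq3 hqm
        (periodic_indicator_coprime (6 * m))
      convert sub_mem (Submodule.smul_mem _ (1 - (q : ℂ)⁻¹) hneg) hsieve using 1
      rw [indicator_coprime_mul hq]
      push_cast
      module

lemma minFac_eq_iff {p : ℕ} (hp : p.Prime) (j : ℕ) :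
    j.minFac = p ↔ (p - 1).factorial.Coprime j ∧ p ∣ j := by
  rcases eq_or_ne j 1 with rfl | hj
  · simp [hp.ne_one.symm, hp.ne_one]
  · rw [Nat.coprime_comm, Nat.coprime_factorial_iff hj]
    constructor
    · rintro rfl
      exact ⟨Nat.sub_one_lt hp.ne_zero, j.minFac_dvd⟩
    · rintro ⟨hlt, hdvd⟩
      exact le_antisymm (Nat.minFac_le_of_dvd hp.two_le hdvd) (Nat.le_of_pred_lt hlt)

lemma exists_indicator_minFac_sub_mem_negligible {p : ℕ} (hp : p.Prime) (hp5 : 5 ≤ p) :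
    ∃ c : ℝ, 0 < c ∧ {j : ℕ | j.minFac = p}.indicator 1 -
      (c : ℂ) • {j | Nat.Coprime 6 j}.indicator 1 ∈ negligible := by
  have hm0 := (p - 1).factorial_ne_zero
  have h6 : 6 ∣ (p - 1).factorial := Nat.factorial_dvd_factorial (show 3 ≤ p - 1 by omega)
  have hpm : ¬ p ∣ (p - 1).factorial := by
    rw [hp.dvd_factorial]
    omega
  obtain ⟨c, hc, hneg⟩ := exists_indicator_coprime_sub_mem_negligible hm0 h6
  refine ⟨(p : ℝ)⁻¹ * c, mul_pos (inv_pos.mpr (Nat.cast_pos.mpr hp.pos)) hc, ?_⟩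
  have hsieve := mul_indicator_dvd_sub_mem_negligible hm0 hp (by omega) hpm
    (periodic_indicator_coprime _)
  convert add_mem hsieve (Submodule.smul_mem _ (p : ℂ)⁻¹ hneg) using 1
  simp only [minFac_eq_iff hp, Set.ofPred_and, Set.inter_indicator_one]
  push_cast
  module

lemma sum_thueMorse_mul_indicator (A : Set ℕ) [DecidablePred (· ∈ A)] (n : ℕ) :
    ∑ j ∈ range n, (thueMorse j : ℂ) * A.indicator 1 j =
      (∑ j ∈ range n with j ∈ A, thueMorse j : ℤ) := by
  simp [Set.indicator_apply, sum_filter]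

lemma eventually_sum_thueMorse_neg {A : Set ℕ} [DecidablePred (· ∈ A)] {c : ℝ} (hc : 0 < c)
    (hA : A.indicator 1 - (c : ℂ) • {j | Nat.Coprime 6 j}.indicator 1 ∈ negligible) :
    ∀ᶠ n in atTop, ∑ j ∈ range n with j ∈ A, thueMorse j < 0 := by
  let T (n : ℕ) : ℤ := ∑ j ∈ range n with Nat.Coprime 6 j, thueMorse j
  have hlittle : (fun n => ((∑ j ∈ range n with j ∈ A, thueMorse j : ℤ) - c * T n : ℝ)) =o[atTop]
      fun n : ℕ => (n : ℝ) ^ Real.logb 4 3 := by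
    refine Asymptotics.IsBigO.trans_isLittleO (.of_norm_le fun n => le_of_eq ?_)
      (mem_negligible.mp hA).norm_left
    have hT := sum_thueMorse_mul_indicator {j | Nat.Coprime 6 j} n
    simp only [Set.mem_ofPred_eq] at hT
    simp only [Pi.sub_apply, Pi.smul_apply, smul_eq_mul, mul_sub, sum_sub_distrib,
      mul_left_comm _ (c : ℂ), ← mul_sum, sum_thueMorse_mul_indicator, hT, T]
    rw [← Complex.norm_real]
    push_cast
    rfl
  have hθ : 0 < (1 / 128 : ℝ) ^ Real.logb 4 3 := by positivity
  filter_upwards [hlittle.bound (mul_pos hc hθ), eventually_ge_atTop 32] with n hn h32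
  have herror : (∑ j ∈ range n with j ∈ A, thueMorse j : ℤ) - c * T n ≤
      c * (n / 128 : ℝ) ^ Real.logb 4 3 := by
    refine ((le_abs_self _).trans hn).trans_eq ?_
    rw [Real.norm_of_nonneg (by positivity), mul_assoc,
      ← Real.mul_rpow (by norm_num) (by positivity), one_div_mul_eq_div]
  have hmain : c * T n ≤ c * (-2 * (n / 128 : ℝ) ^ Real.logb 4 3) :=
    mul_le_mul_of_nonneg_left (sum_thueMorse_coprime_six_le_rpow h32) hc.le
  have hpos : 0 < c * (n / 128 : ℝ) ^ Real.logb 4 3 := by positivity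
  have hneg : ((∑ j ∈ range n with j ∈ A, thueMorse j : ℤ) : ℝ) < 0 := by linarith
  exact_mod_cast hneg

lemma sum_V_eq {p : ℕ} (hp : p ≠ 2) (n : ℕ) : ∑ j ∈ V p n, (-1 : ℝ) ^ s j =
    (∑ j ∈ range (n + 1) with j.minFac = p, thueMorse j : ℤ) := by
  have hV : V p n = {j ∈ range (n + 1) | j.minFac = p} := by
    ext j
    rcases j.eq_zero_or_pos with rfl | hj
    · simp [V, hp.symm]
    · simp [V, Nat.one_le_iff_ne_zero, hj.ne']
  simp [hV, thueMorse]

theorem stmt_14 (p : ℕ) (hp : p.Prime) (hp5 : 5 ≤ p) :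
    ∃ n₀ : ℕ, ∀ n : ℕ, n₀ ≤ n → (∑ j ∈ V p n, (-1 : ℝ) ^ (s j)) < 0 := by
  obtain ⟨c, hc, hneg⟩ := exists_indicator_minFac_sub_mem_negligible hp hp5
  obtain ⟨n₀, hn₀⟩ := eventually_atTop.mp (eventually_sum_thueMorse_neg hc hneg)
  refine ⟨n₀, fun n hn => ?_⟩
  rw [sum_V_eq (by omega)]
  exact_mod_cast hn₀ (n + 1) (hn.trans n.le_succ)
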